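/- arXiv:1709.02283 — 5 statements merged into one kernel-verified Lean document; each statement's English description precedes it below -/
import Mathlib

section
/- Let x be a real number and let (q_n) be any sequence of positive real numbers. Then the inequality q_n * p_{n+1}^x - q_{n+1} * p_n^x < p_n^x * p_{n+1}^(x-1) holds for infinitely many values of n, where p_n denotes the n-th prime number. -/
/-- `nthPrime n` is the `n`-th prime number with 1-based indexing:
`nthPrime 1 = 2`, `nthPrime 2 = 3`, `nthPrime 3 = 5`, ... -/
noncomputable def nthPrime (n : ℕ) : ℕ := Nat.nth Nat.Prime (n - 1)

/-!
Put `r n = q n / p n ^ x`. Dividing by `p n ^ x * p (n + 1) ^ x` turns the inequality into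
`r n - r (n + 1) < 1 / p (n + 1)`. If it failed for all large `n`, then the telescoping sums of
`r n - r (n + 1)`, bounded because `r ≥ 0`, would dominate the divergent series `∑ 1 / p (n + 1)`.
-/

open Filter

theorem summable_of_eventually_le_sub_succ {c r : ℕ → ℝ} (hc : ∀ n, 0 ≤ c n)
    (hr : BddBelow (Set.range r)) (hcr : ∀ᶠ n in atTop, c n ≤ r n - r (n + 1)) :
    Summable c := by
  obtain ⟨N, hN⟩ := eventually_atTop.1 hcr
  obtain ⟨b, hb⟩ := hr
  rw [← summable_nat_add_iff N]
  refine summable_of_sum_range_le (c := r N - b) (fun n ↦ hc (n + N)) fun m ↦ ?_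
  calc ∑ n ∈ Finset.range m, c (n + N)
      ≤ ∑ n ∈ Finset.range m, (r (n + N) - r (n + 1 + N)) :=
        Finset.sum_le_sum fun n _ ↦ by
          simpa only [add_right_comm] using hN (n + N) (Nat.le_add_left N n)
    _ = r N - r (m + N) := by
        simpa only [zero_add] using Finset.sum_range_sub' (fun n ↦ r (n + N)) m
    _ ≤ r N - b := sub_le_sub_left (hb (Set.mem_range_self _)) _

theorem mul_rpow_sub_mul_rpow_lt_iff {a b : ℝ} (ha : 0 < a) (hb : 0 < b) (s t x : ℝ) :
    s * b ^ x - t * a ^ x < a ^ x * b ^ (x - 1) ↔ s / a ^ x - t / b ^ x < b⁻¹ := by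
  have hax : 0 < a ^ x := Real.rpow_pos_of_pos ha x
  have hbx : 0 < b ^ x := Real.rpow_pos_of_pos hb x
  rw [div_sub_div _ _ hax.ne' hbx.ne', div_lt_iff₀ (mul_pos hax hbx), Real.rpow_sub_one hb.ne']
  ring_nf

theorem summable_comp_nth_iff {M : Type*} [AddCommMonoid M] [TopologicalSpace M]
    {P : ℕ → Prop} (hP : {n | P n}.Infinite) (f : ℕ → M) :
    Summable (fun n ↦ f (Nat.nth P n)) ↔ Summable ({n | P n}.indicator f) := by
  have hsupp : ∀ m ∉ Set.range (Nat.nth P), {n | P n}.indicator f m = 0 := fun m hm ↦ by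
    rw [Nat.range_nth_of_infinite hP] at hm
    exact Set.indicator_of_notMem hm f
  rw [← (Nat.nth_injective hP).summable_iff hsupp]
  exact summable_congr fun n ↦ (Set.indicator_of_mem (Nat.nth_mem_of_infinite hP n) f).symm

theorem nthPrime_pos (n : ℕ) : 0 < nthPrime n :=
  (Nat.prime_nth_prime (n - 1)).pos

theorem not_summable_inv_nthPrime : ¬ Summable fun n ↦ (nthPrime n : ℝ)⁻¹ := by
  rw [← summable_nat_add_iff 1]
  simpa only [nthPrime, Nat.add_sub_cancel, one_div] using
    (summable_comp_nth_iff Nat.infinite_setOfPred_prime fun n ↦ (1 : ℝ) / n).not.2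
      not_summable_one_div_on_primes

theorem gaps_of_powers_main_general (x : ℝ) {p q : ℕ → ℝ} (hp : ∀ n, 0 < p n)
    (hp_div : ¬ Summable fun n ↦ (p n)⁻¹) (hq : ∀ n, 0 ≤ q n) :
    ∃ᶠ n in atTop,
      q n * p (n + 1) ^ x - q (n + 1) * p n ^ x < p n ^ x * p (n + 1) ^ (x - 1) := by
  simp only [mul_rpow_sub_mul_rpow_lt_iff (hp _) (hp _)]
  have hr : BddBelow (Set.range fun n ↦ q n / p n ^ x) :=
    ⟨0, Set.forall_mem_range.2 fun n ↦ div_nonneg (hq n) (Real.rpow_nonneg (hp n).le x)⟩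
  intro hfail
  refine hp_div ((summable_nat_add_iff 1).1 ?_)
  exact summable_of_eventually_le_sub_succ (fun n ↦ (inv_pos.2 (hp (n + 1))).le) hr
    (hfail.mono fun n ↦ not_lt.1)

/-- For any real `x` and any sequence `q` of positive reals, the inequality
`q n * p (n+1) ^ x - q (n+1) * p n ^ x < p n ^ x * p (n+1) ^ (x - 1)`
holds for infinitely many positive integers `n`. -/
theorem gaps_of_powers_main (x : ℝ) (q : ℕ → ℝ) (hq : ∀ n, 0 < q n) :
    ∃ᶠ n in Filter.atTop, 1 ≤ n ∧
      q n * (nthPrime (n + 1) : ℝ) ^ x - q (n + 1) * (nthPrime n : ℝ) ^ x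
        < (nthPrime n : ℝ) ^ x * (nthPrime (n + 1) : ℝ) ^ (x - 1) :=
  (eventually_ge_atTop 1).and_frequently <|
    gaps_of_powers_main_general x (fun n ↦ Nat.cast_pos.2 (nthPrime_pos n))
      not_summable_inv_nthPrime fun n ↦ (hq n).le
end

section
/- Let (a_n) and (b_n) be sequences of positive real numbers. If there exist a sequence (q_n) of positive real numbers and a positive integer N such that q_n * (a_n / a_{n+1}) - q_{n+1} ≥ b_{n+1} for all n > N, then the series ∑ a_n * b_n converges. -/
/-! Multiplying the hypothesis by `a (n + 1)` turns it into
`a (n + 1) * b (n + 1) ≤ q n * a n - q (n + 1) * a (n + 1)`, whose right-hand side telescopes.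
Since `q n * a n` is bounded below, the partial sums of `∑ a n * b n` are bounded above. -/

open Filter

theorem summable_of_le_sub_succ {f g : ℕ → ℝ} (hf : ∀ n, 0 ≤ f n)
    (hg : BddBelow (Set.range g)) (hfg : ∀ n, f n ≤ g n - g (n + 1)) : Summable f := by
  obtain ⟨m, hm⟩ := hg
  refine summable_of_sum_range_le (c := g 0 - m) hf fun n ↦ ?_
  calc
    ∑ i ∈ Finset.range n, f i ≤ ∑ i ∈ Finset.range n, (g i - g (i + 1)) :=
      Finset.sum_le_sum fun i _ ↦ hfg i
    _ = g 0 - g n := Finset.sum_range_sub' g n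
    _ ≤ g 0 - m := sub_le_sub_left (hm ⟨n, rfl⟩) _

theorem summable_of_eventually_le_sub_succ_s1 {f g : ℕ → ℝ} (hf : ∀ᶠ n in atTop, 0 ≤ f n)
    (hg : BddBelow (Set.range g)) (hfg : ∀ᶠ n in atTop, f n ≤ g n - g (n + 1)) :
    Summable f := by
  obtain ⟨N, hN⟩ := eventually_atTop.1 (hf.and hfg)
  have hg_tail : BddBelow (Set.range fun n ↦ g (n + N)) :=
    hg.mono (Set.range_comp_subset_range (· + N) g)
  refine (summable_nat_add_iff N).1 <| summable_of_le_sub_succ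
    (fun n ↦ (hN (n + N) (Nat.le_add_left N n)).1) hg_tail fun n ↦ ?_
  simpa only [Nat.add_right_comm n 1 N] using (hN (n + N) (Nat.le_add_left N n)).2

theorem mul_le_mul_sub_mul_of_le_mul_div_sub {K : Type*} [Field K] [LinearOrder K]
    [IsStrictOrderedRing K] {x y p q b : K} (hy : 0 < y) (h : b ≤ p * (x / y) - q) :
    y * b ≤ p * x - q * y :=
  calc
    y * b ≤ y * (p * (x / y) - q) := mul_le_mul_of_nonneg_left h hy.le
    _ = p * x - q * y := by field_simp

/-- Extension of Kummer's test (sufficiency): if there are a positive sequence `q` and a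
positive integer `N` with `q n * (a n / a (n+1)) - q (n+1) ≥ b (n+1)` for all `n > N`,
then `∑ a n * b n` converges. -/
theorem kummer_extension_sufficient (a b : ℕ → ℝ)
    (ha : ∀ n, 0 < a n) (hb : ∀ n, 0 < b n)
    (h : ∃ (q : ℕ → ℝ) (N : ℕ), 0 < N ∧ (∀ n, 0 < q n) ∧
      ∀ n, N < n → q n * (a n / a (n + 1)) - q (n + 1) ≥ b (n + 1)) :
    Summable (fun n => a n * b n) := by
  obtain ⟨q, N, -, hq, hqb⟩ := h
  have hterm_nonneg (n : ℕ) : 0 ≤ a (n + 1) * b (n + 1) := (mul_pos (ha _) (hb _)).le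
  have hqa_bdd : BddBelow (Set.range fun n ↦ q n * a n) :=
    ⟨0, Set.forall_mem_range.2 fun n ↦ (mul_pos (hq n) (ha n)).le⟩
  have hterm_le : ∀ᶠ n in atTop,
      a (n + 1) * b (n + 1) ≤ q n * a n - q (n + 1) * a (n + 1) :=
    (eventually_gt_atTop N).mono fun n hn ↦
      mul_le_mul_sub_mul_of_le_mul_div_sub (ha (n + 1)) (hqb n hn)
  exact (summable_nat_add_iff 1).1 <|
    summable_of_eventually_le_sub_succ_s1 (.of_forall hterm_nonneg) hqa_bdd hterm_le
end

section
/- Let (a_n) and (b_n) be sequences of positive real numbers. If the series ∑ a_n * b_n converges, then there exists a sequence (q_n) of positive real numbers such that q_n * (a_n / a_{n+1}) - q_{n+1} = b_{n+1} for all n ≥ 1. -/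
/-!
Multiplied by `a (n + 1)`, the recurrence for `q` becomes telescoping: `t n = q n * a n` must
satisfy `t n - t (n + 1) = a (n + 1) * b (n + 1)`, which the tails `t n` of `∑ a n * b n` do.
-/

open Filter

/-- The candidate `q` for Kummer's test: `n ↦ (∑_{i > n} a i * b i) / a n`, with the tail of the
series written as a sum shifted by `n + 1`. -/
noncomputable def kummerSequence {K : Type*} [Field K] [TopologicalSpace K] (a b : ℕ → K)
    (n : ℕ) : K :=
  (∑' k, a (k + (n + 1)) * b (k + (n + 1))) / a n

theorem tsum_nat_add_pos {M : Type*} [AddCommGroup M] [PartialOrder M] [IsOrderedAddMonoid M]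
    [TopologicalSpace M] [IsTopologicalAddGroup M] [OrderClosedTopology M] {f : ℕ → M}
    (hf : Summable f) (nonneg : ∀ n, 0 ≤ f n) (frequently_pos : ∃ᶠ n in atTop, 0 < f n) (m : ℕ) :
    0 < ∑' k, f (k + m) := by
  obtain ⟨n, hmn, hn⟩ := frequently_atTop.mp frequently_pos m
  refine ((summable_nat_add_iff m).mpr hf).tsum_pos (fun k ↦ nonneg (k + m)) (n - m) ?_
  rwa [Nat.sub_add_cancel hmn]

theorem tsum_nat_add_eq_add_tsum_nat_add_succ {M : Type*} [AddCommGroup M] [TopologicalSpace M]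
    [IsTopologicalAddGroup M] [T2Space M] {f : ℕ → M} (hf : Summable f) (m : ℕ) :
    ∑' k, f (k + m) = f m + ∑' k, f (k + (m + 1)) := by
  simpa only [zero_add, add_right_comm, add_assoc] using
    ((summable_nat_add_iff m).mpr hf).tsum_eq_zero_add

theorem kummerSequence_mul_div_sub {K : Type*} [Field K] [TopologicalSpace K]
    [IsTopologicalAddGroup K] [T2Space K] {a b : ℕ → K} (ha : ∀ n, a n ≠ 0)
    (h : Summable fun n ↦ a n * b n) (n : ℕ) :
    kummerSequence a b n * (a n / a (n + 1)) - kummerSequence a b (n + 1) = b (n + 1) := by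
  have tail_split := tsum_nat_add_eq_add_tsum_nat_add_succ h (n + 1)
  simp only [kummerSequence]
  rw [div_mul_div_cancel₀ (ha n), ← sub_div, tail_split, add_sub_cancel_right,
    mul_div_cancel_left₀ _ (ha (n + 1))]

section Ordered

variable {K : Type*} [Field K] [LinearOrder K] [IsStrictOrderedRing K] [TopologicalSpace K]
  [OrderTopology K] {a b : ℕ → K}

theorem kummerSequence_pos (ha : ∀ n, 0 < a n) (hb : ∀ n, 0 ≤ b n)
    (hb_pos : ∃ᶠ n in atTop, 0 < b n) (h : Summable fun n ↦ a n * b n) (n : ℕ) :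
    0 < kummerSequence a b n :=
  div_pos (tsum_nat_add_pos h (fun k ↦ mul_nonneg (ha k).le (hb k))
    (hb_pos.mono fun k ↦ mul_pos (ha k)) (n + 1)) (ha n)

theorem kummer_extension_necessary_general (ha : ∀ n, 0 < a n) (hb : ∀ n, 0 ≤ b n)
    (hb_pos : ∃ᶠ n in atTop, 0 < b n) (h : Summable fun n ↦ a n * b n) :
    ∃ q : ℕ → K, (∀ n, 0 < q n) ∧ ∀ n, q n * (a n / a (n + 1)) - q (n + 1) = b (n + 1) :=
  ⟨kummerSequence a b, kummerSequence_pos ha hb hb_pos h,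
    kummerSequence_mul_div_sub (fun n ↦ (ha n).ne') h⟩

end Ordered

/-- Extension of Kummer's test (necessity): if `∑ a n * b n` converges, then there is a
positive sequence `q` with `q n * (a n / a (n+1)) - q (n+1) = b (n+1)` for all `n ≥ 1`. -/
theorem kummer_extension_necessary (a b : ℕ → ℝ)
    (ha : ∀ n, 0 < a n) (hb : ∀ n, 0 < b n)
    (h : Summable (fun n => a n * b n)) :
    ∃ q : ℕ → ℝ, (∀ n, 0 < q n) ∧
      ∀ n, 1 ≤ n → q n * (a n / a (n + 1)) - q (n + 1) = b (n + 1) := by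
  obtain ⟨q, q_pos, hq⟩ :=
    kummer_extension_necessary_general ha (fun n ↦ (hb n).le) (Frequently.of_forall hb) h
  exact ⟨q, q_pos, fun n _ ↦ hq n⟩
end

section
/- Let x be a real number and let (q_n) be any sequence of positive real numbers. Then the inequality p_{n+1}^x - p_n^x < (p_n * p_{n+1})^x / (q_n * p_{n+1}) + p_n^x * (q_{n+1} - q_n) / q_n holds for infinitely many values of n, where p_n denotes the n-th prime number. -/
/-!
Write `a n = p n ^ x` and `b n = q n / a n`. Multiplied by `q n / (a n * a (n + 1))`, the inequality
becomes `b n - b (n + 1) < 1 / p (n + 1)`. If it failed from some point on, the partial sums of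
`∑ 1 / p (n + 1)` would be bounded by telescoping sums of the positive sequence `b`, so the
reciprocals of the primes would be summable.
-/

open Filter

theorem frequently_sub_succ_lt_of_not_summable {b c : ℕ → ℝ}
    (hb : IsBoundedUnder (· ≥ ·) atTop b) (hc : ∀ᶠ n in atTop, 0 ≤ c n) (hsum : ¬ Summable c) :
    ∃ᶠ n in atTop, b n - b (n + 1) < c n := by
  intro hle
  obtain ⟨m, hm⟩ := hb.eventually_ge
  obtain ⟨N, hN⟩ := eventually_atTop.mp (hm.and (hc.and hle))
  have hge : ∀ n, m ≤ b (n + N) := fun n => (hN (n + N) (by omega)).1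
  have hnonneg : ∀ n, 0 ≤ c (n + N) := fun n => (hN (n + N) (by omega)).2.1
  have hstep : ∀ n, c (n + N) ≤ b (n + N) - b (n + 1 + N) := fun n => by
    simpa only [Nat.add_right_comm n N 1, not_lt] using (hN (n + N) (by omega)).2.2
  refine hsum ((summable_nat_add_iff N).mp
    (summable_of_sum_range_le (c := b N - m) hnonneg fun n => ?_))
  calc ∑ i ∈ Finset.range n, c (i + N)
      ≤ ∑ i ∈ Finset.range n, (b (i + N) - b (i + 1 + N)) := Finset.sum_le_sum fun i _ => hstep i
    _ = b (0 + N) - b (n + N) := Finset.sum_range_sub' (fun i => b (i + N)) n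
    _ ≤ b N - m := by simpa only [zero_add] using sub_le_sub_left (hge n) (b N)

theorem sub_lt_mul_div_add_iff_div_sub_div_lt {K : Type*} [Field K] [LinearOrder K]
    [IsStrictOrderedRing K] {a a' q : K} (p q' : K) (ha : 0 < a) (ha' : 0 < a') (hq : 0 < q) :
    a' - a < a * a' / (q * p) + a * (q' - q) / q ↔ q / a - q' / a' < 1 / p := by
  have hfactor : a * a' / (q * p) + a * (q' - q) / q - (a' - a)
      = a * a' / q * (1 / p - (q / a - q' / a')) := by
    field_simp
    ring
  rw [← sub_pos, hfactor, mul_pos_iff_of_pos_left (by positivity), sub_pos]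

theorem summable_comp_nth_iff_summable_indicator {α : Type*} [AddCommMonoid α] [TopologicalSpace α]
    {P : ℕ → Prop} (hP : {n | P n}.Infinite) (f : ℕ → α) :
    Summable (f ∘ Nat.nth P) ↔ Summable ({n | P n}.indicator f) := by
  have hsupport : ∀ m ∉ Set.range (Nat.nth P), {n | P n}.indicator f m = 0 := fun m hm =>
    Set.indicator_of_notMem (by rwa [Nat.range_nth_of_infinite hP] at hm) f
  rw [← (Nat.nth_injective hP).summable_iff hsupport]
  exact summable_congr fun n => (Set.indicator_of_mem (Nat.nth_mem_of_infinite hP n) f).symm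

theorem not_summable_one_div_nthPrime : ¬ Summable fun n => 1 / (nthPrime n : ℝ) := by
  rw [← summable_nat_add_iff 1]
  exact (summable_comp_nth_iff_summable_indicator Nat.infinite_setOfPred_prime
    fun n => 1 / (n : ℝ)).not.mpr not_summable_one_div_on_primes

theorem gaps_of_powers_general_bound_general {a p q : ℕ → ℝ} (ha : ∀ᶠ n in atTop, 0 < a n)
    (hp : ∀ᶠ n in atTop, 0 < p n) (hq : ∀ᶠ n in atTop, 0 < q n)
    (hsum : ¬ Summable fun n => 1 / p n) :
    ∃ᶠ n in atTop,
      a (n + 1) - a n < a n * a (n + 1) / (q n * p (n + 1)) + a n * (q (n + 1) - q n) / q n := by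
  have hbdd : IsBoundedUnder (· ≥ ·) atTop fun n => q n / a n :=
    isBoundedUnder_of_eventually_ge (a := 0) <| by
      filter_upwards [hq, ha] with n hqn han using (div_pos hqn han).le
  have hnonneg : ∀ᶠ n in atTop, 0 ≤ 1 / p (n + 1) := by
    filter_upwards [(tendsto_add_atTop_nat 1).eventually hp] with n hpn
    exact (one_div_pos.mpr hpn).le
  have hfreq : ∃ᶠ n in atTop, q n / a n - q (n + 1) / a (n + 1) < 1 / p (n + 1) :=
    frequently_sub_succ_lt_of_not_summable hbdd hnonneg ((summable_nat_add_iff 1).not.mpr hsum)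
  refine hfreq.mp ?_
  filter_upwards [ha, (tendsto_add_atTop_nat 1).eventually ha, hq] with n han han' hqn
  exact (sub_lt_mul_div_add_iff_div_sub_div_lt _ _ han han' hqn).mpr

/-- For any real `x` and any positive sequence `q`, the inequality
`p (n+1) ^ x - p n ^ x < (p n * p (n+1)) ^ x / (q n * p (n+1)) + p n ^ x * (q (n+1) - q n) / q n`
holds for infinitely many positive integers `n`. -/
theorem gaps_of_powers_general_bound (x : ℝ) (q : ℕ → ℝ) (hq : ∀ n, 0 < q n) :
    ∃ᶠ n in Filter.atTop, 1 ≤ n ∧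
      (nthPrime (n + 1) : ℝ) ^ x - (nthPrime n : ℝ) ^ x
        < ((nthPrime n : ℝ) * (nthPrime (n + 1) : ℝ)) ^ x / (q n * (nthPrime (n + 1) : ℝ))
          + (nthPrime n : ℝ) ^ x * (q (n + 1) - q n) / q n := by
  have hpos : ∀ n, (0 : ℝ) < nthPrime n := fun n => Nat.cast_pos.mpr (nthPrime_pos n)
  simp only [Real.mul_rpow (Nat.cast_nonneg _) (Nat.cast_nonneg _)]
  exact (eventually_ge_atTop 1).and_frequently <| gaps_of_powers_general_bound_general
    (.of_forall fun n => Real.rpow_pos_of_pos (hpos n) x) (.of_forall hpos) (.of_forall hq)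
    not_summable_one_div_nthPrime
end

section
/- For every real number x > 0, the limit inferior as n → ∞ of (p_{n+1} - p_n) / (log p_n)^{1+x} equals 0, where p_n denotes the n-th prime number and log is the natural logarithm. -/
/-!
Since `θ (p_{n+1} - 1) = θ (p_n - 1) + log p_n`, consecutive values of `(p_n - 1) - C * θ (p_n - 1)`
differ by `(p_{n+1} - p_n) - C * log p_n`. Chebyshev's bound `θ t ≥ c * t` for large `t`, valid for
any `c < log 2`, makes this sequence tend to `-∞` as soon as `C > 1 / log 2`, so it decreases
infinitely often: infinitely many gaps are below `C * log p_n`, which is negligible compared with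
`(log p_n) ^ (1 + x)`.
-/

open Filter Asymptotics Chebyshev

section Liminf

variable {ι : Type*} {l : Filter ι}

theorem liminf_eq_of_eventually_ge_of_frequently_le {α : Type*} [ConditionallyCompleteLinearOrder α]
    [DenselyOrdered α] [NoMaxOrder α] {u : ι → α} {a : α} (hge : ∀ᶠ i in l, a ≤ u i)
    (hle : ∀ b > a, ∃ᶠ i in l, u i ≤ b) : liminf u l = a := by
  refine le_antisymm (le_of_forall_gt_imp_ge_of_dense fun b hb ↦ ?_) ?_
  · exact liminf_le_of_frequently_le (hle b hb) (isBoundedUnder_of_eventually_ge hge)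
  · obtain ⟨b, hb⟩ := exists_gt a
    exact le_liminf_of_le (.of_frequently_le (hle b hb)) hge

theorem liminf_div_eq_zero_of_frequently_le_mul {u v g : ι → ℝ} {C : ℝ} (hu : ∀ᶠ i in l, 0 ≤ u i)
    (hg : ∀ᶠ i in l, 0 ≤ g i) (huv : ∃ᶠ i in l, u i ≤ C * v i) (hvg : v =o[l] g) :
    liminf (fun i ↦ u i / g i) l = 0 := by
  refine liminf_eq_of_eventually_ge_of_frequently_le ?_ fun ε hε ↦ ?_
  · filter_upwards [hu, hg] with i hui hgi using div_nonneg hui hgi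
  · have hCv : ∀ᶠ i in l, ‖C * v i‖ ≤ ε * ‖g i‖ := (hvg.const_mul_left C).def hε
    refine (huv.and_eventually (hCv.and hg)).mono fun i ⟨hui, hvi, hgi⟩ ↦ ?_
    refine div_le_of_le_mul₀ hgi hε.le ?_
    calc u i ≤ C * v i := hui
      _ ≤ ‖C * v i‖ := Real.le_norm_self _
      _ ≤ ε * ‖g i‖ := hvi
      _ = ε * g i := by rw [Real.norm_of_nonneg hgi]

end Liminf

theorem frequently_succ_lt_of_tendsto_atBot {α : Type*} [LinearOrder α] [NoMinOrder α] {d : ℕ → α}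
    (hd : Tendsto d atTop atBot) : ∃ᶠ n in atTop, d (n + 1) < d n := by
  refine (tendsto_sub_atTop_nat 1).frequently ?_
  refine ((frequently_low_scores hd).and_eventually (eventually_gt_atTop 0)).mono ?_
  rintro n ⟨hlow, hn⟩
  simpa only [Nat.sub_add_cancel hn] using hlow (n - 1) (Nat.sub_one_lt_of_lt hn)

theorem isLittleO_sqrt_mul_log_id_atTop : (fun t : ℝ ↦ √t * Real.log t) =o[atTop] id := by
  have hlog : Real.log =o[atTop] fun t ↦ √t := by
    simpa only [Real.sqrt_eq_rpow] using isLittleO_log_rpow_atTop one_half_pos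
  refine ((isBigO_refl Real.sqrt atTop).mul_isLittleO hlog).congr' .rfl ?_
  filter_upwards [eventually_ge_atTop 0] with t ht using Real.mul_self_sqrt ht

theorem isLittleO_log_add_const_id_atTop (a : ℝ) : (fun t ↦ Real.log (t + a)) =o[atTop] id := by
  have hlog := Real.isLittleO_log_id_atTop.comp_tendsto
    (tendsto_atTop_add_const_right atTop a tendsto_id)
  exact hlog.trans_isBigO ((isBigO_refl id atTop).add (isLittleO_const_id_atTop a).isBigO)

theorem isLittleO_rpow_rpow_atTop {r s : ℝ} (hrs : r < s) :
    (fun t : ℝ ↦ t ^ r) =o[atTop] fun t ↦ t ^ s := by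
  have hpow : (fun t : ℝ ↦ t ^ (-(s - r))) =o[atTop] fun _ ↦ (1 : ℝ) :=
    (isLittleO_one_iff ℝ).2 (tendsto_rpow_neg_atTop (sub_pos.2 hrs))
  refine (hpow.mul_isBigO (isBigO_refl (fun t ↦ t ^ s) atTop)).congr' ?_
    (.of_forall fun _ ↦ one_mul _)
  filter_upwards [eventually_gt_atTop 0] with t ht
  rw [← Real.rpow_add ht, neg_sub, sub_add_cancel]

theorem isLittleO_log_log_rpow_atTop {s : ℝ} (hs : 1 < s) :
    Real.log =o[atTop] fun t ↦ Real.log t ^ s := by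
  have hrpow : (fun t : ℝ ↦ t) =o[atTop] fun t ↦ t ^ s := by
    simpa only [Real.rpow_one] using isLittleO_rpow_rpow_atTop hs
  exact hrpow.comp_tendsto Real.tendsto_log_atTop

theorem eventually_mul_le_theta {c : ℝ} (hc : c < Real.log 2) : ∀ᶠ t in atTop, c * t ≤ θ t := by
  have herr : (fun t ↦ Real.log 2 + Real.log (t + 2) + 2 * (√t * Real.log t)) =o[atTop] id :=
    ((isLittleO_const_id_atTop _).add (isLittleO_log_add_const_id_atTop 2)).add
      (isLittleO_sqrt_mul_log_id_atTop.const_mul_left 2)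
  filter_upwards [herr.def (sub_pos.2 hc), eventually_ge_atTop 1] with t hsmall ht
  have hsmall := (Real.le_norm_self _).trans hsmall
  rw [id, Real.norm_of_nonneg (zero_le_one.trans ht)] at hsmall
  linarith [theta_ge' ht]

theorem tendsto_sub_mul_theta_atBot {C : ℝ} (hC : (Real.log 2)⁻¹ < C) :
    Tendsto (fun t ↦ t - C * θ t) atTop atBot := by
  have hlog : 0 < Real.log 2 := Real.log_pos one_lt_two
  have hCpos : 0 < C := (inv_pos.2 hlog).trans hC
  obtain ⟨c, hCc, hc⟩ := exists_between (inv_lt_of_inv_lt₀ hlog hC)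
  have hneg : 1 - C * c < 0 := sub_neg.2 ((inv_lt_iff_one_lt_mul₀' hCpos).1 hCc)
  refine tendsto_atBot_mono' _ ?_ (tendsto_id.const_mul_atTop_of_neg hneg)
  filter_upwards [eventually_mul_le_theta hc] with t ht
  calc t - C * θ t ≤ t - C * (c * t) := by gcongr
    _ = (1 - C * c) * id t := by rw [id]; ring

theorem theta_natCast_sub_one (n : ℕ) : θ (n - 1) = ∑ p ∈ n.primesBelow, Real.log p := by
  rw [theta_eq_sum_primesLE, Nat.floor_sub_one, Nat.floor_natCast,
    Nat.primesBelow_eq_primesLE_sub_one]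

theorem theta_nth_prime_succ_sub_one (k : ℕ) :
    θ (Nat.nth Nat.Prime (k + 1) - 1) =
      θ (Nat.nth Nat.Prime k - 1) + Real.log (Nat.nth Nat.Prime k) := by
  have hinsert : (Nat.nth Nat.Prime (k + 1)).primesBelow =
      insert (Nat.nth Nat.Prime k) (Nat.nth Nat.Prime k).primesBelow :=
    Nat.filter_range_nth_eq_insert_of_infinite Nat.infinite_setOfPred_prime k
  rw [theta_natCast_sub_one, theta_natCast_sub_one, hinsert,
    Finset.sum_insert (Nat.notMem_primesBelow _), add_comm]

theorem tendsto_nth_prime_atTop : Tendsto (Nat.nth Nat.Prime) atTop atTop :=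
  (Nat.nth_strictMono Nat.infinite_setOfPred_prime).tendsto_atTop

theorem frequently_nth_prime_gap_lt_mul_log {C : ℝ} (hC : (Real.log 2)⁻¹ < C) :
    ∃ᶠ k in atTop, (Nat.nth Nat.Prime (k + 1) : ℝ) - Nat.nth Nat.Prime k <
      C * Real.log (Nat.nth Nat.Prime k) := by
  have hpred : Tendsto (fun k ↦ (Nat.nth Nat.Prime k : ℝ) - 1) atTop atTop :=
    tendsto_atTop_add_const_right _ _ (tendsto_natCast_atTop_atTop.comp tendsto_nth_prime_atTop)
  have hdesc := frequently_succ_lt_of_tendsto_atBot ((tendsto_sub_mul_theta_atBot hC).comp hpred)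
  refine hdesc.mono fun k hk ↦ ?_
  simp only [Function.comp_apply, theta_nth_prime_succ_sub_one] at hk
  linarith

theorem monotone_nthPrime : Monotone nthPrime :=
  (Nat.nth_monotone Nat.infinite_setOfPred_prime).comp fun _ _ h ↦ Nat.sub_le_sub_right h 1

theorem tendsto_nthPrime_atTop : Tendsto nthPrime atTop atTop :=
  tendsto_nth_prime_atTop.comp (tendsto_sub_atTop_nat 1)

theorem liminf_prime_gap_div_log_pow_general {g : ℕ → ℝ} (hg : ∀ᶠ n in atTop, 0 ≤ g n)
    (hlog : (fun n ↦ Real.log (nthPrime n)) =o[atTop] g) :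
    liminf (fun n ↦ ((nthPrime (n + 1) : ℝ) - nthPrime n) / g n) atTop = 0 := by
  have hgap : ∀ n, (0 : ℝ) ≤ nthPrime (n + 1) - nthPrime n := fun n ↦
    sub_nonneg.2 (Nat.cast_le.2 (monotone_nthPrime n.le_succ))
  obtain ⟨C, hC⟩ := exists_gt (Real.log 2)⁻¹
  have hsmall : ∃ᶠ n in atTop,
      (nthPrime (n + 1) : ℝ) - nthPrime n ≤ C * Real.log (nthPrime n) :=
    (tendsto_add_atTop_nat 1).frequently
      ((frequently_nth_prime_gap_lt_mul_log hC).mono fun _ ↦ le_of_lt)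
  exact liminf_div_eq_zero_of_frequently_le_mul (.of_forall hgap) hg hsmall hlog

/-- For every real `x > 0`, `liminf (p (n+1) - p n) / (log (p n)) ^ (1 + x) = 0`. -/
theorem liminf_prime_gap_div_log_pow (x : ℝ) (hx : 0 < x) :
    Filter.liminf
      (fun n => ((nthPrime (n + 1) : ℝ) - (nthPrime n : ℝ))
        / (Real.log (nthPrime n)) ^ (1 + x))
      Filter.atTop = 0 :=
  liminf_prime_gap_div_log_pow_general
    (.of_forall fun n ↦ Real.rpow_nonneg (Real.log_natCast_nonneg (nthPrime n)) (1 + x))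
    ((isLittleO_log_log_rpow_atTop (lt_add_of_pos_right 1 hx)).comp_tendsto
      (tendsto_natCast_atTop_atTop.comp tendsto_nthPrime_atTop))
end
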